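/- Let q ≥ 1 be an integer, H ∈ (1/2, 1) and t > 0. Define the kernel L_t^{H,q} : ℝ^q → ℝ by L_t^{H,q}(y_1, …, y_q) = ∫_0^t ∏_{i=1}^q (u - y_i)_+^{-(1/2 + (1-H)/q)} du. Then L_t^{H,q} is square integrable on ℝ^q, i.e. ∫_{ℝ^q} ( L_t^{H,q}(y_1,…,y_q) )² dy_1 … dy_q < ∞. -/

import Mathlib

open MeasureTheory

/-- `(s)_+^a`, equal to `s^a` when `s > 0` and to `0` otherwise. -/
noncomputable def posPow (s a : ℝ) : ℝ := if 0 < s then s ^ a else 0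

/-- The kernel of the Hermite process of order `q` and self-similarity index `H`:
`L_t^{H,q}(y₁,…,y_q) = ∫_0^t ∏_{i=1}^q (u - yᵢ)_+^{-(1/2 + (1-H)/q)} du`. -/
noncomputable def hermiteKernel (q : ℕ) (H t : ℝ) (y : Fin q → ℝ) : ℝ :=
  ∫ u in Set.Ioo (0:ℝ) t, ∏ i : Fin q, posPow (u - y i) (-(1/2 + (1 - H) / q))

lemma lintegral_pi_fin_prod_const {α : Type*} [MeasurableSpace α] (μ : Measure α) [SigmaFinite μ]
    {f : α → ENNReal} (hf : Measurable f) (n : ℕ) :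
    ∫⁻ x : Fin n → α, ∏ i, f (x i) ∂(Measure.pi fun _ => μ) = (∫⁻ x, f x ∂μ) ^ n := by
  induction n with
  | zero => simp
  | succ n ih =>
    have hm : Measurable fun x : Fin n → α => ∏ i, f (x i) :=
      Finset.measurable_prod _ fun i _ => hf.comp (measurable_pi_apply i)
    rw [← ((measurePreserving_piFinSuccAbove (fun _ => μ) 0).symm).lintegral_comp_emb
      (MeasurableEquiv.measurableEmbedding _)]
    simp_rw [MeasurableEquiv.piFinSuccAbove_symm_apply, Fin.insertNthEquiv,
      Fin.prod_univ_succ]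
    simp only [Equiv.coe_fn_mk, Fin.insertNth_zero, Fin.cons_zero, Fin.cons_succ, cast_eq]
    rw [lintegral_prod_mul hf.aemeasurable hm.aemeasurable, ih, pow_succ']

lemma measurable_posPow (a : ℝ) : Measurable fun s : ℝ => posPow s a :=
  Measurable.ite measurableSet_Ioi (measurable_id.pow_const a) measurable_const

lemma posPow_nonneg (s a : ℝ) : 0 ≤ posPow s a := by
  unfold posPow
  split_ifs with h
  · positivity
  · exact le_rfl

lemma lintegral_posPow_mul_posPow_add_le {β d : ℝ} (h1 : 1 / 2 < β) (h2 : β < 1) (hd : 0 < d) :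
    ∫⁻ s : ℝ, ENNReal.ofReal (posPow s (-β)) * ENNReal.ofReal (posPow (s + d) (-β)) ≤
      ENNReal.ofReal ((1 / (1 - β) + 1 / (2 * β - 1)) * d ^ (1 - 2 * β)) := by
  have key : ∀ s : ℝ,
      ENNReal.ofReal (posPow s (-β)) * ENNReal.ofReal (posPow (s + d) (-β)) ≤
        (Set.Ioc 0 d).indicator (fun s => ENNReal.ofReal (s ^ (-β) * d ^ (-β))) s +
        (Set.Ioi d).indicator (fun s => ENNReal.ofReal (s ^ (-2 * β))) s := by
    intro s
    rw [← ENNReal.ofReal_mul (posPow_nonneg _ _)]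
    rcases le_or_gt s 0 with hs | hs
    · simp [posPow, not_lt.2 hs]
    · have hsd : 0 < s + d := by positivity
      simp only [posPow, hs, hsd, if_true]
      rcases le_or_gt s d with h | h
      · rw [Set.indicator_of_mem (show s ∈ Set.Ioc 0 d from ⟨hs, h⟩)]
        refine le_add_right (ENNReal.ofReal_le_ofReal ?_)
        exact mul_le_mul_of_nonneg_left
          (Real.rpow_le_rpow_of_nonpos hd (by linarith) (by linarith)) (by positivity)
      · rw [Set.indicator_of_mem (show s ∈ Set.Ioi d from h)]
        refine le_add_left (ENNReal.ofReal_le_ofReal ?_)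
        rw [show -2 * β = -β + -β by ring, Real.rpow_add hs]
        exact mul_le_mul_of_nonneg_left
          (Real.rpow_le_rpow_of_nonpos hs (by linarith) (by linarith)) (by positivity)
  have e1 : ∫⁻ s in Set.Ioc 0 d, ENNReal.ofReal (s ^ (-β) * d ^ (-β)) =
      ENNReal.ofReal (1 / (1 - β) * d ^ (1 - 2 * β)) := by
    have hi : IntegrableOn (fun s : ℝ => s ^ (-β) * d ^ (-β)) (Set.Ioc 0 d) :=
      (((intervalIntegrable_iff_integrableOn_Ioc_of_le hd.le).1
        (intervalIntegral.intervalIntegrable_rpow' (by linarith))).mul_const _)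
    rw [← ofReal_integral_eq_lintegral_ofReal hi, integral_mul_const,
      ← intervalIntegral.integral_of_le hd.le, integral_rpow (Or.inl (by linarith)),
      Real.zero_rpow (by linarith), show 1 - 2 * β = (-β + 1) + -β by ring,
      Real.rpow_add hd (-β + 1) (-β), show -β + 1 = 1 - β by ring]
    · congr 1
      ring
    · filter_upwards [ae_restrict_mem measurableSet_Ioc] with s hs
      have := hs.1
      positivity
  have e2 : ∫⁻ s in Set.Ioi d, ENNReal.ofReal (s ^ (-2 * β)) =
      ENNReal.ofReal (1 / (2 * β - 1) * d ^ (1 - 2 * β)) := by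
    rw [← ofReal_integral_eq_lintegral_ofReal
      (integrableOn_Ioi_rpow_of_lt (by linarith) hd), integral_Ioi_rpow_of_lt (by linarith) hd,
      show -2 * β + 1 = 1 - 2 * β by ring]
    · congr 1
      have : 1 - 2 * β ≠ 0 := by linarith
      have : 2 * β - 1 ≠ 0 := by linarith
      field_simp
      ring
    · filter_upwards [ae_restrict_mem measurableSet_Ioi] with s hs
      have : 0 < s := hd.trans hs
      positivity
  have p1 : 0 < 1 - β := by linarith
  have p2 : 0 < 2 * β - 1 := by linarith
  refine (lintegral_mono key).trans ?_
  rw [lintegral_add_left, lintegral_indicator measurableSet_Ioc,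
    lintegral_indicator measurableSet_Ioi, e1, e2, ← ENNReal.ofReal_add, add_mul]
  · positivity
  · positivity
  · exact Measurable.indicator (by fun_prop) measurableSet_Ioc

lemma lintegral_posPow_sub_mul_posPow_sub_le {β u v : ℝ} (h1 : 1 / 2 < β) (h2 : β < 1)
    (huv : u ≠ v) :
    ∫⁻ y : ℝ, ENNReal.ofReal (posPow (u - y) (-β)) * ENNReal.ofReal (posPow (v - y) (-β)) ≤
      ENNReal.ofReal ((1 / (1 - β) + 1 / (2 * β - 1)) * |u - v| ^ (1 - 2 * β)) := by
  wlog h : u < v generalizing u v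
  · have := this huv.symm (lt_of_le_of_ne (not_lt.1 h) huv.symm)
    rw [abs_sub_comm]
    simpa only [mul_comm (ENNReal.ofReal (posPow (v - _) _))] using this
  rw [abs_sub_comm, abs_of_pos (sub_pos.2 h)]
  refine le_trans (le_of_eq ?_) (lintegral_posPow_mul_posPow_add_le h1 h2 (sub_pos.2 h))
  rw [← lintegral_sub_left_eq_self _ u]
  refine lintegral_congr fun y => ?_
  rw [show u - (u - y) = y by ring, show v - (u - y) = y + (v - u) by ring]

lemma lintegral_abs_rpow_lt_top {c t : ℝ} (hc : -1 < c) (ht : 0 < t) :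
    ∫⁻ w in Set.Ioo (-t) t, ENNReal.ofReal (|w| ^ c) < ⊤ := by
  have hpos : IntegrableOn (fun w : ℝ => |w| ^ c) (Set.Ioc 0 t) := by
    refine ((intervalIntegrable_iff_integrableOn_Ioc_of_le ht.le).1
      (intervalIntegral.intervalIntegrable_rpow' hc)).congr_fun (fun w hw => ?_) measurableSet_Ioc
    simp [abs_of_pos hw.1]
  have hp : IntervalIntegrable (fun w : ℝ => |w| ^ c) volume 0 t :=
    (intervalIntegrable_iff_integrableOn_Ioc_of_le ht.le).2 hpos
  have hn : IntervalIntegrable (fun w : ℝ => |w| ^ c) volume (-t) 0 := by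
    simpa using ((IntervalIntegrable.iff_comp_neg (by simp)).1 hp).symm
  have := (intervalIntegrable_iff_integrableOn_Ioo_of_le (by linarith)).1 (hn.trans hp)
  exact this.lintegral_lt_top

lemma ofReal_hermiteKernel_sq_le (q : ℕ) (H t : ℝ) (y : Fin q → ℝ) :
    ENNReal.ofReal ((hermiteKernel q H t y) ^ 2) ≤
      ∫⁻ u in Set.Ioo 0 t, ∫⁻ v in Set.Ioo 0 t,
        ∏ i : Fin q, (ENNReal.ofReal (posPow (u - y i) (-(1/2 + (1 - H) / q))) *
          ENNReal.ofReal (posPow (v - y i) (-(1/2 + (1 - H) / q)))) := by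
  set a := -(1/2 + (1 - H) / q)
  have hm : Measurable fun u : ℝ => ∏ i : Fin q, ENNReal.ofReal (posPow (u - y i) a) :=
    Finset.measurable_prod _ fun i _ =>
      ((measurable_posPow a).comp (measurable_id.sub_const _)).ennreal_ofReal
  have hle : ‖hermiteKernel q H t y‖ₑ ≤
      ∫⁻ u in Set.Ioo 0 t, ∏ i : Fin q, ENNReal.ofReal (posPow (u - y i) a) := by
    refine (enorm_integral_le_lintegral_enorm _).trans (le_of_eq (lintegral_congr fun u => ?_))
    rw [Real.enorm_of_nonneg (Finset.prod_nonneg fun _ _ => posPow_nonneg _ _),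
      ENNReal.ofReal_prod_of_nonneg fun _ _ => posPow_nonneg _ _]
  calc ENNReal.ofReal ((hermiteKernel q H t y) ^ 2)
      = ‖hermiteKernel q H t y‖ₑ ^ 2 := by
        rw [← sq_abs, ENNReal.ofReal_pow (abs_nonneg _), Real.enorm_eq_ofReal_abs]
    _ ≤ (∫⁻ u in Set.Ioo 0 t, ∏ i : Fin q, ENNReal.ofReal (posPow (u - y i) a)) ^ 2 := by
        gcongr
    _ = _ := by
        rw [sq, ← lintegral_mul_const _ hm]
        refine lintegral_congr fun u => ?_
        rw [← lintegral_const_mul _ hm]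
        simp only [Finset.prod_mul_distrib]

theorem stmt_13 (q : ℕ) (hq : 1 ≤ q) (H : ℝ) (hH : H ∈ Set.Ioo (1/2 : ℝ) 1)
    (t : ℝ) (ht : 0 < t) :
    (∫⁻ y : Fin q → ℝ, ENNReal.ofReal ((hermiteKernel q H t y) ^ 2)) < ⊤ := by
  obtain ⟨hH1, hH2⟩ := hH
  have hq1 : (1 : ℝ) ≤ q := by exact_mod_cast hq
  have hq0 : (0 : ℝ) < q := by linarith
  refine (lintegral_mono (ofReal_hermiteKernel_sq_le q H t)).trans_lt ?_
  set β := 1/2 + (1 - H) / q with hβ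
  have h1 : 1 / 2 < β := by
    have : 0 < (1 - H) / q := div_pos (by linarith) hq0
    linarith
  have h2 : β < 1 := by
    have : (1 - H) / q ≤ 1 - H := div_le_self (by linarith) hq1
    linarith
  set C := 1 / (1 - β) + 1 / (2 * β - 1)
  have hC : 0 ≤ C := by
    have p1 : 0 < 1 - β := by linarith
    have p2 : 0 < 2 * β - 1 := by linarith
    positivity
  have hg : Measurable fun s : ℝ => ENNReal.ofReal (posPow s (-β)) :=
    (measurable_posPow _).ennreal_ofReal
  have hexp : (1 - 2 * β) * q = 2 * H - 2 := by
    rw [hβ]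
    field_simp
    ring
  have hm : Measurable fun p : ((Fin q → ℝ) × ℝ) × ℝ => ∏ i : Fin q,
      (ENNReal.ofReal (posPow (p.1.2 - p.1.1 i) (-β)) *
        ENNReal.ofReal (posPow (p.2 - p.1.1 i) (-β))) :=
    Finset.measurable_prod _ fun i _ =>
      (hg.comp (by fun_prop : Measurable fun p : ((Fin q → ℝ) × ℝ) × ℝ => p.1.2 - p.1.1 i)).mul
        (hg.comp (by fun_prop : Measurable fun p : ((Fin q → ℝ) × ℝ) × ℝ => p.2 - p.1.1 i))
  rw [lintegral_lintegral_swap (Measurable.lintegral_prod_right' hm).aemeasurable]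
  have inner : ∀ u v : ℝ, u ≠ v → ∫⁻ y : Fin q → ℝ, ∏ i : Fin q,
      (ENNReal.ofReal (posPow (u - y i) (-β)) * ENNReal.ofReal (posPow (v - y i) (-β))) ≤
        ENNReal.ofReal (C ^ q) * ENNReal.ofReal (|v - u| ^ (2 * H - 2)) := by
    intro u v huv
    have hmu : Measurable fun y : ℝ =>
        ENNReal.ofReal (posPow (u - y) (-β)) * ENNReal.ofReal (posPow (v - y) (-β)) :=
      (hg.comp (measurable_const.sub measurable_id)).mul
        (hg.comp (measurable_const.sub measurable_id))
    rw [volume_pi, lintegral_pi_fin_prod_const volume hmu]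
    refine (pow_le_pow_left' (lintegral_posPow_sub_mul_posPow_sub_le h1 h2 huv) q).trans ?_
    rw [← ENNReal.ofReal_pow (by positivity), ← ENNReal.ofReal_mul (by positivity), mul_pow,
      ← Real.rpow_mul_natCast (abs_nonneg _), hexp, abs_sub_comm]
  have bound : ∀ u ∈ Set.Ioo 0 t, ∫⁻ y : Fin q → ℝ, ∫⁻ v in Set.Ioo 0 t, ∏ i : Fin q,
      (ENNReal.ofReal (posPow (u - y i) (-β)) * ENNReal.ofReal (posPow (v - y i) (-β))) ≤
        ENNReal.ofReal (C ^ q) *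
          ∫⁻ w in Set.Ioo (-t) t, ENNReal.ofReal (|w| ^ (2 * H - 2)) := by
    intro u hu
    have hmu := hm.comp
      (by fun_prop : Measurable fun p : (Fin q → ℝ) × ℝ => ((p.1, u), p.2))
    rw [lintegral_lintegral_swap (by exact hmu.aemeasurable)]
    have hae : ∀ᵐ v ∂(volume.restrict (Set.Ioo 0 t)), u ≠ v := by
      filter_upwards [ae_restrict_of_ae (Measure.ae_ne volume u)] with v hv using hv.symm
    refine (lintegral_mono_ae (hae.mono fun v hv => inner u v hv)).trans ?_
    rw [lintegral_const_mul _ (by fun_prop)]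
    refine mul_le_mul_right ?_ _
    rw [← lintegral_indicator measurableSet_Ioo, ← lintegral_indicator measurableSet_Ioo,
      ← lintegral_sub_right_eq_self ((Set.Ioo (-t) t).indicator _) u]
    refine lintegral_mono fun v => ?_
    by_cases hv : v ∈ Set.Ioo 0 t
    · rw [Set.indicator_of_mem hv, Set.indicator_of_mem]
      constructor <;> linarith [hv.1, hv.2, hu.1, hu.2]
    · rw [Set.indicator_of_notMem hv]
      exact zero_le
  refine (setLIntegral_mono measurable_const bound).trans_lt ?_
  rw [lintegral_const]
  refine ENNReal.mul_lt_top (ENNReal.mul_lt_top ENNReal.ofReal_lt_top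
    (lintegral_abs_rpow_lt_top (by linarith) ht)) ?_
  simp
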